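/- arXiv:2605.17808 — 5 statements merged into one kernel-verified Lean document; each statement's English description precedes it below -/
import Mathlib

section
/- Let (X, μ) be a measure space, let p, q, ξ : X → ℝ be measurable with p ≥ 0, and let δ > 0, ε > 0. Assume: (i) μ({x : p(x) ≥ δ and q(x) = ε}) = 0; (ii) x ↦ p(x)·1{p(x) ≥ δ}·|ξ(x)| is integrable; (iii) x ↦ p(x)·1{p(x) ≥ δ}·max(ε − q(x), 0) is integrable. Then the function h ↦ ∫_X p(x)·1{p(x) ≥ δ}·max(ε − (q(x) + h·ξ(x)), 0) dμ(x) is differentiable at h = 0 with derivative −∫_{\{p ≥ δ, q < ε\}} p(x)·ξ(x) dμ(x). -/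
/-!
The proof differentiates under the integral sign. For fixed `x` with `δ ≤ p x`, the integrand
`h ↦ p x * max (ε - (q x + h * ξ x)) 0` is Lipschitz with constant `p x * |ξ x|`, because
`t ↦ max t 0` is `1`-Lipschitz; this constant is integrable by assumption. If `q x ≠ ε`, the argument
of the positive part is nonzero at `h = 0`, so by continuity the integrand is, for `h` near `0`,
either affine with slope `-(p x * ξ x)` (when `q x < ε`) or zero (when `q x > ε`). The kink
`q x = ε` is a null set, so `hasDerivAt_integral_of_dominated_loc_of_lip` applies.
-/

open MeasureTheory

/-- One-step regional repair of the soft under-coverage mass (Proposition 1):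
the map `h ↦ ∫ p·1{p ≥ δ}·[ε − (q + hξ)]₊ dμ` is differentiable at `h = 0`
with derivative `−∫_{p ≥ δ, q < ε} p ξ dμ`. -/
theorem stmt_3 {X : Type*} [MeasurableSpace X] (μ : Measure X)
    (p q ξ : X → ℝ) (hpm : Measurable p) (hqm : Measurable q) (hξm : Measurable ξ)
    (hp : ∀ x, 0 ≤ p x) (δ ε : ℝ) (hδ : 0 < δ) (hε : 0 < ε)
    (hbd : μ {x | δ ≤ p x ∧ q x = ε} = 0)
    (hint1 : Integrable (fun x => p x * (if δ ≤ p x then (1 : ℝ) else 0) * |ξ x|) μ)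
    (hint2 : Integrable (fun x => p x * (if δ ≤ p x then (1 : ℝ) else 0) * max (ε - q x) 0) μ) :
    HasDerivAt
      (fun h : ℝ => ∫ x, p x * (if δ ≤ p x then (1 : ℝ) else 0)
        * max (ε - (q x + h * ξ x)) 0 ∂μ)
      (-(∫ x in {x | δ ≤ p x ∧ q x < ε}, p x * ξ x ∂μ)) 0 := by
  have hS : MeasurableSet {x | δ ≤ p x ∧ q x < ε} :=
    (measurableSet_le measurable_const hpm).inter (measurableSet_lt hqm measurable_const)
  have hite : Measurable fun x => if δ ≤ p x then (1 : ℝ) else 0 :=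
    Measurable.ite (measurableSet_le measurable_const hpm) measurable_const measurable_const
  rw [← integral_neg, ← integral_indicator hS]
  refine (hasDerivAt_integral_of_dominated_loc_of_lip (μ := μ) (s := Set.univ)
    (bound := fun x => p x * (if δ ≤ p x then (1 : ℝ) else 0) * |ξ x|)
    Filter.univ_mem (Filter.Eventually.of_forall fun h => ?_) ?_ ?_
    (Filter.Eventually.of_forall fun x => ?_) hint1 ?_).2
  · exact ((hpm.mul hite).mul ((measurable_const.sub
      (hqm.add (measurable_const.mul hξm))).max measurable_const)).aestronglyMeasurable
  · simpa using hint2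
  · exact ((hpm.mul hξm).neg.indicator hS).aestronglyMeasurable
  · have hc : 0 ≤ p x * (if δ ≤ p x then (1 : ℝ) else 0) :=
      mul_nonneg (hp x) (by split_ifs <;> norm_num)
    refine LipschitzOnWith.of_dist_le_mul fun a _ b _ => ?_
    rw [Real.coe_nnabs, abs_of_nonneg (mul_nonneg hc (abs_nonneg _)), Real.dist_eq, Real.dist_eq,
      ← mul_sub, abs_mul, abs_of_nonneg hc, mul_assoc _ |ξ x|]
    refine mul_le_mul_of_nonneg_left ((abs_max_sub_max_le_abs _ _ _).trans_eq ?_) hc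
    rw [← abs_mul, ← abs_neg]
    congr 1
    ring
  · have hne : ∀ᵐ x ∂μ, ¬ (δ ≤ p x ∧ q x = ε) := measure_eq_zero_iff_ae_notMem.mp hbd
    filter_upwards [hne] with x hx
    by_cases hpx : δ ≤ p x
    · have hcont : ContinuousAt (fun h : ℝ => q x + h * ξ x) 0 := by fun_prop
      rcases lt_or_gt_of_ne (fun hq => hx ⟨hpx, hq⟩) with hq | hq
      · have hmem : x ∈ {x | δ ≤ p x ∧ q x < ε} := ⟨hpx, hq⟩
        rw [Set.indicator_of_mem hmem]
        have haff : HasDerivAt (fun h : ℝ => p x * (ε - (q x + h * ξ x))) (-(p x * ξ x)) 0 := by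
          simpa using ((((hasDerivAt_id (0 : ℝ)).mul_const (ξ x)).const_add (q x)).const_sub
            ε).const_mul (p x)
        refine haff.congr_of_eventuallyEq ?_
        filter_upwards [hcont.eventually_lt_const (u := ε) (by simpa using hq)] with h hh
        rw [if_pos hpx, mul_one, max_eq_left (by linarith)]
      · have hmem : x ∉ {x | δ ≤ p x ∧ q x < ε} := fun h => lt_asymm hq h.2
        rw [Set.indicator_of_notMem hmem]
        refine (hasDerivAt_const (0 : ℝ) (0 : ℝ)).congr_of_eventuallyEq ?_
        filter_upwards [hcont.eventually_const_lt (u := ε) (by simpa using hq)] with h hh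
        rw [max_eq_right (by linarith), mul_zero]
    · have hmem : x ∉ {x | δ ≤ p x ∧ q x < ε} := fun h => hpx h.1
      rw [Set.indicator_of_notMem hmem]
      simpa [hpx] using hasDerivAt_const (0 : ℝ) (0 : ℝ)
end

section
/- Let d ≥ 1, let p, q : ℝ^d → ℝ be everywhere positive and twice continuously differentiable, and let w : (0,∞) → ℝ be differentiable. Set r(x) = p(x)/q(x) and β(x) = ∇log p(x) − ∇log q(x). Then for every x ∈ ℝ^d, div(q · (w ∘ r) · β)(x) = w(r(x)) · div(q β)(x) + q(x) · w'(r(x)) · r(x) · ‖β(x)‖², where div denotes the divergence (trace of the Jacobian) of a vector field and ‖·‖ is the Euclidean norm. -/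
/-!
Write `r = p / q` and `β = ∇ log p - ∇ log q`. Grouping `q (w ∘ r) β` as the scalar field `w ∘ r`
times the vector field `q β`, the Leibniz rule `div (g F) = g div F + ⟪∇g, F⟫` (`diverg_smul`) gives
`w(r) div (q β) + ⟪∇(w ∘ r), q β⟫`. Since `r = exp (log p - log q)`, the chain rule gives
`∇(w ∘ r) = w'(r) r β`, and the inner product becomes `q w'(r) r ‖β‖²`. The `C²` hypotheses make
`β` differentiable, which the Leibniz rule needs.
-/

/-- Divergence of a vector field on Euclidean space: the trace of the Jacobian,
`div F (x) = ∑ i ∂F_i/∂x_i (x)`. -/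
noncomputable def diverg {d : ℕ} (F : EuclideanSpace ℝ (Fin d) → EuclideanSpace ℝ (Fin d))
    (x : EuclideanSpace ℝ (Fin d)) : ℝ :=
  ∑ i : Fin d, fderiv ℝ F x (EuclideanSpace.single i (1 : ℝ)) i

/-- Leibniz rule for the divergence of a scalar field times a vector field. -/
lemma diverg_smul {d : ℕ} {g : EuclideanSpace ℝ (Fin d) → ℝ}
    {F : EuclideanSpace ℝ (Fin d) → EuclideanSpace ℝ (Fin d)} {G x : EuclideanSpace ℝ (Fin d)}
    (hg : HasGradientAt g G x) (hF : DifferentiableAt ℝ F x) :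
    diverg (fun y => g y • F y) x = g x * diverg F x + inner ℝ G (F x) := by
  have h := (hg.hasFDerivAt.smul hF.hasFDerivAt).fderiv
  unfold diverg
  change ∑ i, fderiv ℝ (g • F) x _ i = _
  rw [h, PiLp.inner_apply, Finset.mul_sum, ← Finset.sum_add_distrib]
  refine Finset.sum_congr rfl fun i _ => ?_
  simp [InnerProductSpace.toDual_apply_apply, EuclideanSpace.inner_single_right, mul_comm]

lemma differentiable_gradient_log {d : ℕ} {p : EuclideanSpace ℝ (Fin d) → ℝ}
    (hp : ∀ x, 0 < p x) (hpc : ContDiff ℝ 2 p) :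
    Differentiable ℝ (gradient fun z => Real.log (p z)) := by
  have h : ContDiff ℝ 2 fun z => Real.log (p z) := hpc.log fun x => (hp x).ne'
  have h1 : Differentiable ℝ (fderiv ℝ fun z => Real.log (p z)) :=
    (h.fderiv_right (m := 1) (by norm_num)).differentiable (by norm_num)
  exact (InnerProductSpace.toDual ℝ
    (EuclideanSpace ℝ (Fin d))).symm.toContinuousLinearEquiv.differentiable.comp h1

/-- The chain rule `∇(w ∘ r) = w'(r) r ∇ log r` for the density ratio `r = p / q`. -/
lemma hasGradientAt_comp_ratio {d : ℕ} {p q : EuclideanSpace ℝ (Fin d) → ℝ} {w : ℝ → ℝ} {c : ℝ}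
    (hp : ∀ x, 0 < p x) (hq : ∀ x, 0 < q x) {x : EuclideanSpace ℝ (Fin d)}
    (hpd : DifferentiableAt ℝ p x) (hqd : DifferentiableAt ℝ q x)
    (hw : HasDerivAt w c (p x / q x)) :
    HasGradientAt (fun y => w (p y / q y))
      ((c * (p x / q x)) •
        (gradient (fun z => Real.log (p z)) x - gradient (fun z => Real.log (q z)) x)) x := by
  have hr : ∀ y, Real.exp (Real.log (p y) - Real.log (q y)) = p y / q y := fun y => by
    rw [Real.exp_sub, Real.exp_log (hp y), Real.exp_log (hq y)]
  have h1 := (hpd.log (hp x).ne').hasGradientAt.hasFDerivAt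
  have h2 := (hqd.log (hq x).ne').hasGradientAt.hasFDerivAt
  have h3 : HasFDerivAt (fun y => p y / q y) ((p x / q x) •
      (InnerProductSpace.toDual ℝ (EuclideanSpace ℝ (Fin d))
          (gradient (fun z => Real.log (p z)) x) -
        InnerProductSpace.toDual ℝ (EuclideanSpace ℝ (Fin d))
          (gradient (fun z => Real.log (q z)) x))) x := by
    rw [← hr x, ← funext hr]
    exact (h1.fun_sub h2).exp
  have h4 := hw.comp_hasFDerivAt x h3
  rw [hasGradientAt_iff_hasFDerivAt]
  have h5 : InnerProductSpace.toDual ℝ (EuclideanSpace ℝ (Fin d)) ((c * (p x / q x)) •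
      (gradient (fun z => Real.log (p z)) x - gradient (fun z => Real.log (q z)) x)) =
      c • (p x / q x) • (InnerProductSpace.toDual ℝ (EuclideanSpace ℝ (Fin d))
          (gradient (fun z => Real.log (p z)) x) -
        InnerProductSpace.toDual ℝ (EuclideanSpace ℝ (Fin d))
          (gradient (fun z => Real.log (q z)) x)) := by
    simp [mul_smul]
  rw [h5]
  exact h4

/-- Density-response identity (eq. (32)): with `r = p/q`, `β = ∇log p − ∇log q`,
`div(q (w∘r) β) = w(r) div(q β) + q w'(r) r ‖β‖²` pointwise. -/
theorem stmt_4 (d : ℕ) (hd : 1 ≤ d)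
    (p q : EuclideanSpace ℝ (Fin d) → ℝ) (w w' : ℝ → ℝ)
    (hp : ∀ x, 0 < p x) (hq : ∀ x, 0 < q x)
    (hpc : ContDiff ℝ 2 p) (hqc : ContDiff ℝ 2 q)
    (hw : ∀ s : ℝ, 0 < s → HasDerivAt w (w' s) s) :
    ∀ x : EuclideanSpace ℝ (Fin d),
      diverg (fun y => (q y * w (p y / q y)) •
          (gradient (fun z => Real.log (p z)) y - gradient (fun z => Real.log (q z)) y)) x
        = w (p x / q x) * diverg (fun y => q y •
            (gradient (fun z => Real.log (p z)) y - gradient (fun z => Real.log (q z)) y)) x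
          + q x * w' (p x / q x) * (p x / q x) *
            ‖gradient (fun z => Real.log (p z)) x - gradient (fun z => Real.log (q z)) x‖ ^ 2 := by
  intro x
  have hβ := ((differentiable_gradient_log hp hpc).sub (differentiable_gradient_log hq hqc)) x
  have hqd : DifferentiableAt ℝ q x := hqc.differentiable (by norm_num) x
  have hpd : DifferentiableAt ℝ p x := hpc.differentiable (by norm_num) x
  have key := diverg_smul
    (hasGradientAt_comp_ratio hp hq hpd hqd (hw _ (div_pos (hp x) (hq x)))) (hqd.smul hβ)
  simp only [Pi.smul_apply', Pi.sub_apply, smul_smul, real_inner_smul_left,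
    real_inner_smul_right, real_inner_self_eq_norm_sq] at key
  simp only [mul_comm (q _) (w _)]
  refine key.trans ?_
  congr 1
  ring
end

section
/- Let d ≥ 1, let x₁, …, x_N ∈ ℝ^d (N ≥ 1), let τ > 0, and define the Laplace kernel density estimate q̂(x) = (1/N)·Σ_{j=1}^N exp(−‖x − x_j‖/τ) on Euclidean space ℝ^d. Then for every x ∈ ℝ^d with x ≠ x_j for all j, q̂ is positive and differentiable at x, and ∇log q̂(x) = (1/τ)·Σ_{j=1}^N W_j(x)·(x_j − x)/‖x_j − x‖, where W_j(x) = exp(−‖x − x_j‖/τ) / Σ_{k=1}^N exp(−‖x − x_k‖/τ). -/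
/-!
Away from its centre `a`, a Laplace kernel `exp (-‖z - a‖ / τ)` is smooth, and since the gradient
of `‖z - a‖ = √(‖z - a‖ ^ 2)` is the unit vector pointing away from `a`, the gradient of the kernel
is the kernel value over `τ` times the unit vector pointing towards `a`
(`hasGradientAt_laplaceKernel`). Summing over the centres and dividing by the positive density, as
the chain rule for `log` prescribes, cancels the factor `1 / N` and turns the kernel values into
softmax weights.
-/

/-- The bandwidth `τ` is arbitrary: for `τ = 0`, division by zero makes the kernel constant and the
claimed gradient zero. -/
lemma hasGradientAt_laplaceKernel {E : Type*} [NormedAddCommGroup E] [InnerProductSpace ℝ E]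
    [CompleteSpace E] (τ : ℝ) {a y : E} (h : y ≠ a) :
    HasGradientAt (fun z => Real.exp (-‖z - a‖ / τ))
      ((Real.exp (-‖y - a‖ / τ) / τ) • (‖a - y‖⁻¹ • (a - y))) y := by
  have hpos : 0 < ‖y - a‖ := norm_pos_iff.mpr (sub_ne_zero.mpr h)
  have hsq : HasFDerivAt (fun z => ‖z - a‖ ^ 2) _ y :=
    ((hasFDerivAt_id y).sub_const a).norm_sq
  have hnorm := hsq.sqrt (by positivity)
  simp only [Real.sqrt_sq (norm_nonneg _)] at hnorm
  rw [hasGradientAt_iff_hasFDerivAt]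
  have hexp := (hnorm.neg.mul_const τ⁻¹).exp
  simp only [Pi.neg_apply, ← div_eq_mul_inv] at hexp
  refine hexp.congr_fderiv ?_
  ext v
  simp [norm_sub_rev a y]
  field_simp
  ring

/-- Exact Laplace-KDE score identity (Section 5.1, Appendix D): away from the
particle locations, the Laplace kernel density estimate
`q̂(x) = (1/N) Σ_j exp(−‖x − x_j‖/τ)` is positive and differentiable, and its
log-score is a softmax-weighted sum of unit displacement vectors scaled by `1/τ`. -/
theorem stmt_13 (d : ℕ) (hd : 1 ≤ d) (N : ℕ) (hN : 1 ≤ N)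
    (x : Fin N → EuclideanSpace ℝ (Fin d)) (τ : ℝ) (hτ : 0 < τ)
    (y : EuclideanSpace ℝ (Fin d)) (hy : ∀ j, y ≠ x j) :
    0 < (1 / (N : ℝ)) * ∑ j, Real.exp (-‖y - x j‖ / τ) ∧
    DifferentiableAt ℝ (fun z : EuclideanSpace ℝ (Fin d) =>
        (1 / (N : ℝ)) * ∑ j, Real.exp (-‖z - x j‖ / τ)) y ∧
    gradient (fun z => Real.log ((1 / (N : ℝ)) * ∑ j, Real.exp (-‖z - x j‖ / τ))) y
      = (1 / τ) • ∑ j, (Real.exp (-‖y - x j‖ / τ)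
          / ∑ k, Real.exp (-‖y - x k‖ / τ)) • (‖x j - y‖⁻¹ • (x j - y)) := by
  have hN0 : (0 : ℝ) < N := by exact_mod_cast hN
  have : Nonempty (Fin N) := ⟨⟨0, hN⟩⟩
  have hS : 0 < ∑ j, Real.exp (-‖y - x j‖ / τ) :=
    Finset.sum_pos (fun j _ => Real.exp_pos _) Finset.univ_nonempty
  have hq : 0 < (1 / (N : ℝ)) * ∑ j, Real.exp (-‖y - x j‖ / τ) := by positivity
  have hdens := (HasFDerivAt.fun_sum (u := Finset.univ) fun j _ =>
    (hasGradientAt_laplaceKernel τ (hy j)).hasFDerivAt).const_mul (1 / (N : ℝ))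
  refine ⟨hq, hdens.differentiableAt, HasGradientAt.gradient ?_⟩
  rw [hasGradientAt_iff_hasFDerivAt]
  refine (hdens.log hq.ne').congr_fderiv ?_
  -- Collect each side under the linear map `toDual`, then compare coefficients term by term.
  simp only [← map_sum, ← map_smul, Finset.smul_sum, smul_smul]
  simp only [map_sum, map_smul]
  refine Finset.sum_congr rfl fun j _ => ?_
  congr 1
  field_simp
end

section
/- Let (X, μ) be a measure space and let L̃, q, φ : X → ℝ be measurable, with q(x) > 0 for a.e. x (L̃ plays the role of log p̃). For ε ∈ ℝ define ℓ_ε(x) = L̃(x) − log(q(x) + ε·φ(x)) and write ℓ = ℓ₀. Assume there exist δ > 0 and integrable functions g₁, g₂ : X → ℝ such that for every |ε| < δ: (i) q + εφ > 0 a.e.; (ii) x ↦ (q(x)+εφ(x))·ℓ_ε(x)² and x ↦ (q(x)+εφ(x))·ℓ_ε(x) are integrable; (iii) for a.e. x, |φ(x)·(ℓ_ε(x)² − 2ℓ_ε(x))| ≤ g₁(x) and |φ(x)·(ℓ_ε(x) − 1)| ≤ g₂(x). Then the function L(ε) = ∫ (q+εφ)·ℓ_ε² dμ − ( ∫ (q+εφ)·ℓ_ε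 dμ )² is differentiable at ε = 0 with derivative ∫ φ·(ℓ² − 2ℓ) dμ − 2·m·∫ φ·(ℓ − 1) dμ, where m = ∫ q·ℓ dμ. -/
open MeasureTheory

/-!
The two integrals are differentiated under the integral sign by dominated convergence, and the
square by the chain rule. With `u = q + εφ` and `ℓ_ε = L - log u`, one has `∂ℓ_ε/∂ε = -φ / u`, so
`∂(u ℓ_ε²) = φ (ℓ_ε² - 2 ℓ_ε)` and `∂(u ℓ_ε) = φ (ℓ_ε - 1)`.

The hypotheses give positivity and domination "for every `ε`, almost everywhere", whereas
dominated convergence needs "almost everywhere, for every `ε`". The exchange is free over the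
countably many rational `ε`. Positivity then passes to all real `ε` because `ε ↦ q + εφ` is affine
(`pos_of_rat`), and the bounds pass to all real `ε` by continuity (`le_of_rat`).
-/

open Filter Topology

/-- A non-strict bound at the rationals of `(-δ, δ)` persists at every point of continuity. -/
lemma le_of_rat {f : ℝ → ℝ} {δ c e : ℝ} (he : |e| < δ) (hf : ContinuousAt f e)
    (h : ∀ r : ℚ, |(r : ℝ)| < δ → f r ≤ c) : f e ≤ c := by
  by_contra! hc
  have h1 : ∀ᶠ y in 𝓝 e, c < f y := hf.eventually (lt_mem_nhds hc)
  have h2 : ∀ᶠ y : ℝ in 𝓝 e, |y| < δ := continuous_abs.continuousAt.eventually (gt_mem_nhds he)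
  obtain ⟨U, hU, hUo, heU⟩ := mem_nhds_iff.1 (h1.and h2)
  obtain ⟨r, hr⟩ := (Rat.denseRange_cast (𝕜 := ℝ)).exists_mem_open hUo ⟨e, heU⟩
  exact absurd (h r (hU hr).2) (not_le.2 (hU hr).1)

/-- Strict positivity of an affine function passes from the rationals to the reals of `(-δ, δ)`:
every real in the interval lies between two rationals of the interval. -/
lemma pos_of_rat {a b δ e : ℝ} (he : |e| < δ)
    (h : ∀ r : ℚ, |(r : ℝ)| < δ → 0 < a + r * b) : 0 < a + e * b := by
  obtain ⟨he1, he2⟩ := abs_lt.1 he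
  obtain ⟨r, hr1, hr2⟩ := exists_rat_btwn he1
  obtain ⟨s, hs1, hs2⟩ := exists_rat_btwn he2
  have hr := h r (abs_lt.2 ⟨hr1, by linarith⟩)
  have hs := h s (abs_lt.2 ⟨by linarith, hs2⟩)
  rcases le_total 0 b with hb | hb
  · nlinarith
  · nlinarith

lemma hasDerivAt_l {a b c e : ℝ} (h : 0 < a + e * b) :
    HasDerivAt (fun ε : ℝ => c - Real.log (a + ε * b)) (-(b / (a + e * b))) e := by
  have h1 : HasDerivAt (fun ε : ℝ => a + ε * b) b e := by
    simpa using ((hasDerivAt_id e).mul_const b).const_add a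
  exact (h1.log h.ne').const_sub c

lemma hasDerivAt_ul {a b c e : ℝ} (h : 0 < a + e * b) :
    HasDerivAt (fun ε : ℝ => (a + ε * b) * (c - Real.log (a + ε * b)))
      (b * ((c - Real.log (a + e * b)) - 1)) e := by
  have h1 : HasDerivAt (fun ε : ℝ => a + ε * b) b e := by
    simpa using ((hasDerivAt_id e).mul_const b).const_add a
  refine (h1.mul (hasDerivAt_l (c := c) h)).congr_deriv ?_
  have := h.ne'
  generalize a + e * b = u at *
  field_simp
  ring

lemma hasDerivAt_ul_sq {a b c e : ℝ} (h : 0 < a + e * b) :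
    HasDerivAt (fun ε : ℝ => (a + ε * b) * (c - Real.log (a + ε * b)) ^ 2)
      (b * ((c - Real.log (a + e * b)) ^ 2 - 2 * (c - Real.log (a + e * b)))) e := by
  have h1 : HasDerivAt (fun ε : ℝ => a + ε * b) b e := by
    simpa using ((hasDerivAt_id e).mul_const b).const_add a
  refine (h1.mul ((hasDerivAt_l (c := c) h).pow 2)).congr_deriv ?_
  have := h.ne'
  simp only [Pi.pow_apply]
  generalize a + e * b = u at *
  field_simp
  push_cast
  ring

/-- First variation of the Log-Variance divergence with reference ν = q
(the 'double coupling' case, Appendix C.1): with `ℓ_ε = L̃ − log(q + εφ)` and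
`ℓ = ℓ₀`, under domination hypotheses the map
`ε ↦ ∫ (q+εφ) ℓ_ε² dμ − (∫ (q+εφ) ℓ_ε dμ)²` is differentiable at `ε = 0` with
derivative `∫ φ (ℓ² − 2ℓ) dμ − 2 m ∫ φ (ℓ − 1) dμ`, where `m = ∫ q ℓ dμ`. -/
theorem stmt_18 {X : Type*} [MeasurableSpace X] (μ : Measure X)
    (L q φ : X → ℝ)
    (hLm : Measurable L) (hqm : Measurable q) (hφm : Measurable φ)
    (hq : ∀ᵐ x ∂μ, 0 < q x)
    (δ : ℝ) (hδ : 0 < δ) (g₁ g₂ : X → ℝ)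
    (hg₁ : Integrable g₁ μ) (hg₂ : Integrable g₂ μ)
    (hpos : ∀ ε : ℝ, |ε| < δ → ∀ᵐ x ∂μ, 0 < q x + ε * φ x)
    (hint2 : ∀ ε : ℝ, |ε| < δ →
      Integrable (fun x => (q x + ε * φ x) * (L x - Real.log (q x + ε * φ x)) ^ 2) μ)
    (hint1 : ∀ ε : ℝ, |ε| < δ →
      Integrable (fun x => (q x + ε * φ x) * (L x - Real.log (q x + ε * φ x))) μ)
    (hbd1 : ∀ ε : ℝ, |ε| < δ → ∀ᵐ x ∂μ,
      |φ x * ((L x - Real.log (q x + ε * φ x)) ^ 2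
        - 2 * (L x - Real.log (q x + ε * φ x)))| ≤ g₁ x)
    (hbd2 : ∀ ε : ℝ, |ε| < δ → ∀ᵐ x ∂μ,
      |φ x * ((L x - Real.log (q x + ε * φ x)) - 1)| ≤ g₂ x) :
    HasDerivAt
      (fun ε : ℝ =>
        (∫ x, (q x + ε * φ x) * (L x - Real.log (q x + ε * φ x)) ^ 2 ∂μ)
          - (∫ x, (q x + ε * φ x) * (L x - Real.log (q x + ε * φ x)) ∂μ) ^ 2)
      ((∫ x, φ x * ((L x - Real.log (q x)) ^ 2 - 2 * (L x - Real.log (q x))) ∂μ)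
        - 2 * (∫ x, q x * (L x - Real.log (q x)) ∂μ)
            * ∫ x, φ x * ((L x - Real.log (q x)) - 1) ∂μ)
      0 := by
  have hpos' : ∀ᵐ x ∂μ, ∀ e : ℝ, |e| < δ → 0 < q x + e * φ x := by
    have : ∀ᵐ x ∂μ, ∀ r : ℚ, |(r : ℝ)| < δ → 0 < q x + r * φ x :=
      ae_all_iff.2 fun r => by
        by_cases hr : |(r : ℝ)| < δ
        · simpa [hr] using hpos r hr
        · simp [hr]
    filter_upwards [this] with x hx e he using pos_of_rat he hx
  have exchange : ∀ (F : ℝ → X → ℝ) (g : X → ℝ),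
      (∀ x, (∀ e : ℝ, |e| < δ → 0 < q x + e * φ x) →
        ∀ e : ℝ, |e| < δ → ContinuousAt (fun ε => F ε x) e) →
      (∀ e : ℝ, |e| < δ → ∀ᵐ x ∂μ, |F e x| ≤ g x) →
      ∀ᵐ x ∂μ, ∀ e ∈ Metric.ball (0 : ℝ) δ, ‖F e x‖ ≤ g x := by
    intro F g hc hb
    have : ∀ᵐ x ∂μ, ∀ r : ℚ, |(r : ℝ)| < δ → |F r x| ≤ g x :=
      ae_all_iff.2 fun r => by
        by_cases hr : |(r : ℝ)| < δ
        · simpa [hr] using hb r hr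
        · simp [hr]
    filter_upwards [this, hpos'] with x hx hp e he
    have he' : |e| < δ := by simpa using he
    exact le_of_rat (f := fun ε => |F ε x|) he' (hc x hp e he').abs hx
  have h0 : |(0 : ℝ)| < δ := by simpa using hδ
  have hb1 := exchange (fun e x => φ x * ((L x - Real.log (q x + e * φ x)) ^ 2
        - 2 * (L x - Real.log (q x + e * φ x)))) g₁
    (fun x hp e he => by
      have hl := (hasDerivAt_l (c := L x) (hp e he)).continuousAt
      exact continuousAt_const.mul ((hl.pow 2).sub (continuousAt_const.mul hl))) hbd1
  have hb2 := exchange (fun e x => φ x * ((L x - Real.log (q x + e * φ x)) - 1)) g₂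
    (fun x hp e he => by
      have hl := (hasDerivAt_l (c := L x) (hp e he)).continuousAt
      exact continuousAt_const.mul (hl.sub continuousAt_const)) hbd2
  have d1 := (hasDerivAt_integral_of_dominated_loc_of_deriv_le (μ := μ)
    (Metric.ball_mem_nhds (0 : ℝ) hδ)
    (F := fun e x => (q x + e * φ x) * (L x - Real.log (q x + e * φ x)) ^ 2)
    (Eventually.of_forall fun e => by
      have : Measurable fun x => (q x + e * φ x) * (L x - Real.log (q x + e * φ x)) ^ 2 := by
        fun_prop
      exact this.aestronglyMeasurable)
    (hint2 0 h0)
    (F' := fun e x => φ x * ((L x - Real.log (q x + e * φ x)) ^ 2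
        - 2 * (L x - Real.log (q x + e * φ x))))
    (by
      have : Measurable fun x => φ x * ((L x - Real.log (q x + 0 * φ x)) ^ 2
        - 2 * (L x - Real.log (q x + 0 * φ x))) := by fun_prop
      exact this.aestronglyMeasurable)
    hb1 hg₁
    (hpos'.mono fun x hp e he => hasDerivAt_ul_sq (hp e (by simpa using he)))).2
  have d2 := (hasDerivAt_integral_of_dominated_loc_of_deriv_le (μ := μ)
    (Metric.ball_mem_nhds (0 : ℝ) hδ)
    (F := fun e x => (q x + e * φ x) * (L x - Real.log (q x + e * φ x)))
    (Eventually.of_forall fun e => by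
      have : Measurable fun x => (q x + e * φ x) * (L x - Real.log (q x + e * φ x)) := by
        fun_prop
      exact this.aestronglyMeasurable)
    (hint1 0 h0)
    (F' := fun e x => φ x * ((L x - Real.log (q x + e * φ x)) - 1))
    (by
      have : Measurable fun x => φ x * ((L x - Real.log (q x + 0 * φ x)) - 1) := by fun_prop
      exact this.aestronglyMeasurable)
    hb2 hg₂
    (hpos'.mono fun x hp e he => hasDerivAt_ul (hp e (by simpa using he)))).2
  refine (d1.sub (d2.pow 2)).congr_deriv ?_
  simp
end

section
/- Let (X, μ) be a measure space and let L̃, P, q, φ : X → ℝ be measurable, with q(x) > 0 a.e. and P ≥ 0 a fixed weight (playing the role of the target density p). For ε ∈ ℝ define ℓ_ε(x) = L̃(x) − log(q(x) + ε·φ(x)) and write ℓ = ℓ₀. Assume there exist δ > 0 and integrable functions g₁, g₂ : X → ℝ such that for every |ε| < δ: (i) q + εφ > 0 a.e.; (ii) x ↦ P(x)·ℓ_ε(x)² and x ↦ P(x)·ℓ_ε(x) are integrable; (iii) for a.e. x, |P(x)·φ(x)·ℓ_ε(x)/(q(x)+εφ(x))| ≤ g₁(x) and |P(x)·φ(x)/(q(x)+εφ(x))|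 ≤ g₂(x). Then the function L(ε) = ∫ P·ℓ_ε² dμ − ( ∫ P·ℓ_ε dμ )² is differentiable at ε = 0 with derivative −2·∫ (P(x)/q(x))·(ℓ(x) − m)·φ(x) dμ(x), where m = ∫ P·ℓ dμ. -/
open MeasureTheory

/-!
Both integrals defining the functional are differentiated under the integral sign, by dominated
convergence. Their integrands have `ε`-derivatives `-2 P φ ℓ_ε / (q + εφ)` and `-P φ / (q + εφ)`,
dominated by `2 g₁` and `g₂`; the chain rule for the square of the second integral and linearity
of the integral then give the formula.

The one point needing care is the order of quantifiers: the hypotheses hold for each `ε` outside a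
null set that may depend on `ε`, while domination requires one null set for all `ε`. Positivity
and the bounds hold almost everywhere simultaneously at all rational `ε`. Positivity extends to
every `ε` because `ε ↦ q x + ε φ x` is affine; this makes the dominated functions continuous in
`ε`, so the bounds extend by density.
-/

/-- An affine function positive at the rational points of an open interval is positive on it. -/
lemma affine_pos_of_rat {δ a b : ℝ} (h : ∀ r : ℚ, |(r : ℝ)| < δ → 0 < a + r * b)
    {ε : ℝ} (hε : |ε| < δ) : 0 < a + ε * b := by
  obtain ⟨h1, h2⟩ := abs_lt.1 hε
  obtain ⟨r, hr1, hr2⟩ := exists_rat_btwn h1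
  obtain ⟨t, ht1, ht2⟩ := exists_rat_btwn h2
  have hr := h r (abs_lt.2 ⟨hr1, by linarith⟩)
  have ht := h t (abs_lt.2 ⟨by linarith, ht2⟩)
  rcases le_total 0 b with hb | hb
  · nlinarith
  · nlinarith

lemma le_of_rat_of_continuousOn {δ c : ℝ} {f : ℝ → ℝ}
    (hf : ContinuousOn f (Metric.ball 0 δ))
    (h : ∀ r : ℚ, |(r : ℝ)| < δ → f r ≤ c) {ε : ℝ} (hε : ε ∈ Metric.ball (0 : ℝ) δ) :
    f ε ≤ c := by
  by_contra! hc
  have ho := hf.isOpen_inter_preimage Metric.isOpen_ball (isOpen_Ioi (a := c))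
  obtain ⟨r, hr⟩ := (Rat.denseRange_cast (𝕜 := ℝ)).exists_mem_open ho ⟨ε, hε, hc⟩
  have hr1 : |(r : ℝ)| < δ := mem_ball_zero_iff.1 hr.1
  exact absurd (h r hr1) (not_le.2 hr.2)

/-- First variation of the Log-Variance divergence with reference ν = p
(Appendix C.2): with fixed weight `P`, `ℓ_ε = L̃ − log(q + εφ)` and `ℓ = ℓ₀`,
under domination hypotheses the map
`ε ↦ ∫ P ℓ_ε² dμ − (∫ P ℓ_ε dμ)²` is differentiable at `ε = 0` with derivative
`−2 ∫ (P/q)(ℓ − m) φ dμ`, where `m = ∫ P ℓ dμ`. -/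
theorem stmt_19 {X : Type*} [MeasurableSpace X] (μ : Measure X)
    (L P q φ : X → ℝ)
    (hLm : Measurable L) (hPm : Measurable P) (hqm : Measurable q) (hφm : Measurable φ)
    (hq : ∀ᵐ x ∂μ, 0 < q x) (hP : ∀ x, 0 ≤ P x)
    (δ : ℝ) (hδ : 0 < δ) (g₁ g₂ : X → ℝ)
    (hg₁ : Integrable g₁ μ) (hg₂ : Integrable g₂ μ)
    (hpos : ∀ ε : ℝ, |ε| < δ → ∀ᵐ x ∂μ, 0 < q x + ε * φ x)
    (hint2 : ∀ ε : ℝ, |ε| < δ →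
      Integrable (fun x => P x * (L x - Real.log (q x + ε * φ x)) ^ 2) μ)
    (hint1 : ∀ ε : ℝ, |ε| < δ →
      Integrable (fun x => P x * (L x - Real.log (q x + ε * φ x))) μ)
    (hbd1 : ∀ ε : ℝ, |ε| < δ → ∀ᵐ x ∂μ,
      |P x * φ x * (L x - Real.log (q x + ε * φ x)) / (q x + ε * φ x)| ≤ g₁ x)
    (hbd2 : ∀ ε : ℝ, |ε| < δ → ∀ᵐ x ∂μ,
      |P x * φ x / (q x + ε * φ x)| ≤ g₂ x) :
    HasDerivAt
      (fun ε : ℝ =>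
        (∫ x, P x * (L x - Real.log (q x + ε * φ x)) ^ 2 ∂μ)
          - (∫ x, P x * (L x - Real.log (q x + ε * φ x)) ∂μ) ^ 2)
      (-2 * ∫ x, (P x / q x) *
          ((L x - Real.log (q x)) - ∫ y, P y * (L y - Real.log (q y)) ∂μ) * φ x ∂μ)
      0 := by
  have hposU : ∀ᵐ x ∂μ, ∀ ε ∈ Metric.ball (0 : ℝ) δ, 0 < q x + ε * φ x := by
    have h : ∀ᵐ x ∂μ, ∀ r : ℚ, |(r : ℝ)| < δ → 0 < q x + r * φ x :=
      ae_all_iff.2 fun r => Filter.eventually_imp_distrib_left.2 (hpos r)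
    filter_upwards [h] with x hx ε hε
    exact affine_pos_of_rat hx (by simpa using hε)
  have hbdU1 : ∀ᵐ x ∂μ, ∀ ε ∈ Metric.ball (0 : ℝ) δ,
      |P x * φ x * (L x - Real.log (q x + ε * φ x)) / (q x + ε * φ x)| ≤ g₁ x := by
    have h : ∀ᵐ x ∂μ, ∀ r : ℚ, |(r : ℝ)| < δ →
        |P x * φ x * (L x - Real.log (q x + r * φ x)) / (q x + r * φ x)| ≤ g₁ x :=
      ae_all_iff.2 fun r => Filter.eventually_imp_distrib_left.2 (hbd1 r)
    filter_upwards [h, hposU] with x hx hp ε hε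
    have hne : ∀ t ∈ Metric.ball (0 : ℝ) δ, q x + t * φ x ≠ 0 := fun t ht => (hp t ht).ne'
    have hlin : ContinuousOn (fun t : ℝ => q x + t * φ x) (Metric.ball 0 δ) := by fun_prop
    exact le_of_rat_of_continuousOn
      (((continuousOn_const.mul (continuousOn_const.sub (hlin.log hne))).div hlin hne).abs) hx hε
  have hbdU2 : ∀ᵐ x ∂μ, ∀ ε ∈ Metric.ball (0 : ℝ) δ,
      |P x * φ x / (q x + ε * φ x)| ≤ g₂ x := by
    have h : ∀ᵐ x ∂μ, ∀ r : ℚ, |(r : ℝ)| < δ →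
        |P x * φ x / (q x + r * φ x)| ≤ g₂ x :=
      ae_all_iff.2 fun r => Filter.eventually_imp_distrib_left.2 (hbd2 r)
    filter_upwards [h, hposU] with x hx hp ε hε
    have hne : ∀ t ∈ Metric.ball (0 : ℝ) δ, q x + t * φ x ≠ 0 := fun t ht => (hp t ht).ne'
    have hlin : ContinuousOn (fun t : ℝ => q x + t * φ x) (Metric.ball 0 δ) := by fun_prop
    exact le_of_rat_of_continuousOn ((continuousOn_const.div hlin hne).abs) hx hε
  have hℓ : ∀ᵐ x ∂μ, ∀ ε ∈ Metric.ball (0 : ℝ) δ,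
      HasDerivAt (fun ε => L x - Real.log (q x + ε * φ x)) (-(φ x / (q x + ε * φ x))) ε := by
    filter_upwards [hposU] with x hp ε hε
    have h1 : HasDerivAt (fun ε : ℝ => q x + ε * φ x) (φ x) ε := by
      simpa using ((hasDerivAt_id ε).mul_const (φ x)).const_add (q x)
    exact (h1.log (hp ε hε).ne').const_sub (L x)
  have h0 : |(0 : ℝ)| < δ := by simpa using hδ
  obtain ⟨hI1, hD1⟩ := hasDerivAt_integral_of_dominated_loc_of_deriv_le (μ := μ) (𝕜 := ℝ)
    (F := fun ε x => P x * (L x - Real.log (q x + ε * φ x)) ^ 2)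
    (F' := fun ε x => -2 * (P x * φ x * (L x - Real.log (q x + ε * φ x)) / (q x + ε * φ x)))
    (x₀ := 0) (bound := fun x => 2 * g₁ x) (Metric.ball_mem_nhds 0 hδ)
    (.of_forall fun ε => Measurable.aestronglyMeasurable (by fun_prop))
    (hint2 0 h0) (Measurable.aestronglyMeasurable (by fun_prop))
    (by
      filter_upwards [hbdU1] with x hx ε hε
      rw [norm_mul, Real.norm_eq_abs, Real.norm_eq_abs, abs_neg, abs_two]
      exact mul_le_mul_of_nonneg_left (hx ε hε) zero_le_two)
    (hg₁.const_mul 2)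
    (by
      filter_upwards [hℓ] with x hx ε hε
      refine (((hx ε hε).pow 2).const_mul (P x)).congr_deriv ?_
      push_cast
      ring)
  obtain ⟨hI2, hD2⟩ := hasDerivAt_integral_of_dominated_loc_of_deriv_le (μ := μ) (𝕜 := ℝ)
    (F := fun ε x => P x * (L x - Real.log (q x + ε * φ x)))
    (F' := fun ε x => -(P x * φ x / (q x + ε * φ x)))
    (x₀ := 0) (bound := g₂) (Metric.ball_mem_nhds 0 hδ)
    (.of_forall fun ε => Measurable.aestronglyMeasurable (by fun_prop))
    (hint1 0 h0) (Measurable.aestronglyMeasurable (by fun_prop))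
    (by
      filter_upwards [hbdU2] with x hx ε hε
      rw [norm_neg]
      exact hx ε hε)
    hg₂
    (by
      filter_upwards [hℓ] with x hx ε hε
      refine ((hx ε hε).const_mul (P x)).congr_deriv ?_
      ring)
  refine (hD1.sub (hD2.pow 2)).congr_deriv ?_
  simp only [zero_mul, add_zero] at hI1 hI2 ⊢
  rw [← integral_const_mul (-2), ← integral_const_mul, ← integral_sub hI1 (hI2.const_mul _)]
  refine integral_congr_ae (.of_forall fun x => ?_)
  push_cast
  ring
end
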